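/- The sum Σ_{n=1}^{∞} Λ(n)²/n² converges and is strictly less than 0.8053, where Λ is the von Mangoldt function. -/

import Mathlib

open ArithmeticFunction

/-! ### Dirichlet convolution of real sequences at `s = 2` -/

lemma LSeries_term_ofReal_two (f : ℕ → ℝ) :
    LSeries.term (fun n => (f n : ℂ)) 2 = fun n : ℕ => ((f n / (n : ℝ) ^ 2 : ℝ) : ℂ) := by
  ext n
  rcases eq_or_ne n 0 with rfl | hn
  · simp
  · rw [LSeries.term_of_ne_zero hn]
    norm_cast

lemma LSeriesSummable_ofReal_two {f : ℕ → ℝ} :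
    LSeriesSummable (fun n => (f n : ℂ)) 2 ↔ Summable fun n : ℕ => f n / (n : ℝ) ^ 2 := by
  rw [LSeriesSummable, LSeries_term_ofReal_two, Complex.summable_ofReal]

lemma LSeries_ofReal_two (f : ℕ → ℝ) :
    LSeries (fun n => (f n : ℂ)) 2 = ((∑' n : ℕ, f n / (n : ℝ) ^ 2 : ℝ) : ℂ) := by
  rw [LSeries, LSeries_term_ofReal_two, Complex.ofReal_tsum]

open scoped LSeries.notation in
lemma convolution_ofReal (f g : ℕ → ℝ) :
    (fun n => (f n : ℂ)) ⍟ (fun n => (g n : ℂ)) =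
      fun n => ((∑ p ∈ n.divisorsAntidiagonal, f p.1 * g p.2 : ℝ) : ℂ) := by
  rw [LSeries.convolution_def]
  push_cast
  rfl

lemma summable_convolution_div_sq {f g : ℕ → ℝ} (hf : Summable fun n : ℕ => f n / (n : ℝ) ^ 2)
    (hg : Summable fun n : ℕ => g n / (n : ℝ) ^ 2) :
    Summable fun n : ℕ => (∑ p ∈ n.divisorsAntidiagonal, f p.1 * g p.2) / (n : ℝ) ^ 2 := by
  rw [← LSeriesSummable_ofReal_two] at *
  rw [← convolution_ofReal]
  exact hf.convolution hg

lemma tsum_convolution_div_sq {f g : ℕ → ℝ} (hf : Summable fun n : ℕ => f n / (n : ℝ) ^ 2)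
    (hg : Summable fun n : ℕ => g n / (n : ℝ) ^ 2) :
    ∑' n : ℕ, (∑ p ∈ n.divisorsAntidiagonal, f p.1 * g p.2) / (n : ℝ) ^ 2 =
      (∑' n : ℕ, f n / (n : ℝ) ^ 2) * ∑' n : ℕ, g n / (n : ℝ) ^ 2 := by
  have h := LSeries_convolution' (LSeriesSummable_ofReal_two.2 hf) (LSeriesSummable_ofReal_two.2 hg)
  rw [convolution_ofReal] at h
  simp only [LSeries_ofReal_two] at h
  exact_mod_cast h

lemma sum_divisorsAntidiagonal_vonMangoldt_mul_one (n : ℕ) :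
    ∑ p ∈ n.divisorsAntidiagonal, Λ p.1 * 1 = Real.log n := by
  simp_rw [mul_one]
  rw [Nat.sum_divisorsAntidiagonal (f := fun i _ => Λ i), vonMangoldt_sum]

lemma log_sq_eq_sum_divisorsAntidiagonal (n : ℕ) :
    Real.log n ^ 2 = ∑ p ∈ n.divisorsAntidiagonal, (Λ p.1 * Real.log p.1) * 1 +
      ∑ p ∈ n.divisorsAntidiagonal, Λ p.1 * Real.log p.2 := by
  rw [sq]
  nth_rw 1 [← sum_divisorsAntidiagonal_vonMangoldt_mul_one n]
  rw [Finset.sum_mul, ← Finset.sum_add_distrib]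
  refine Finset.sum_congr rfl fun p hp => ?_
  obtain ⟨h₁, h₂⟩ := Nat.ne_zero_of_mem_divisorsAntidiagonal hp
  rw [← (Nat.mem_divisorsAntidiagonal.1 hp).1, Nat.cast_mul,
    Real.log_mul (by exact_mod_cast h₁) (by exact_mod_cast h₂)]
  ring

/-! ### Bounds for increments of the logarithm -/

lemma log_succ_sub_log_bounds {n : ℕ} (hn : 1 ≤ n) (K : ℕ) :
    2 * ∑ i ∈ Finset.range K, (1 / (2 * n + 1) : ℝ) ^ (2 * i + 1) / (2 * i + 1) ≤
      Real.log (n + 1 : ℕ) - Real.log n ∧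
    Real.log (n + 1 : ℕ) - Real.log n ≤
      2 * (∑ i ∈ Finset.range K, (1 / (2 * n + 1) : ℝ) ^ (2 * i + 1) / (2 * i + 1) +
        (1 / (2 * n + 1)) ^ (2 * K + 1) / (1 - (1 / (2 * n + 1)) ^ 2)) := by
  have hn' : (1 : ℝ) ≤ n := by exact_mod_cast hn
  have hx : (1 / (2 * n + 1) : ℝ) < 1 := by rw [div_lt_one] <;> linarith
  have e : (1 + 1 / (2 * n + 1 : ℝ)) / (1 - 1 / (2 * n + 1)) = (n + 1) / n := by
    have : (1 - 1 / (2 * n + 1) : ℝ) ≠ 0 := by linarith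
    field_simp
    ring
  have h₁ := Real.sum_range_le_log_div (x := 1 / (2 * n + 1 : ℝ)) (by positivity) hx K
  have h₂ := Real.log_div_le_sum_range_add (x := 1 / (2 * n + 1 : ℝ)) (by positivity) hx K
  rw [e, Real.log_div (by positivity) (by positivity)] at h₁ h₂
  push_cast
  constructor <;> linarith

lemma two_div_le_log_succ_sub_log {n : ℕ} (hn : 1 ≤ n) :
    2 / (2 * n + 1 : ℝ) ≤ Real.log (n + 1 : ℕ) - Real.log n := by
  have := (log_succ_sub_log_bounds hn 1).1
  simpa [div_eq_mul_inv] using this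

lemma log_succ_sub_log_le {n : ℕ} (hn : 1 ≤ n) :
    Real.log (n + 1 : ℕ) - Real.log n ≤ (2 * n + 1) / (2 * n * (n + 1) : ℝ) := by
  have hn' : (1 : ℝ) ≤ n := by exact_mod_cast hn
  refine (log_succ_sub_log_bounds hn 0).2.trans_eq ?_
  have : (1 - (1 / (2 * n + 1)) ^ 2 : ℝ) = 4 * n * (n + 1) / (2 * n + 1) ^ 2 := by
    field_simp
    ring
  rw [this]
  simp
  field_simp
  norm_num

/-! ### Tails of `∑ log n ^ 2 / n ^ 2` and `∑ log n / n ^ 2` -/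

/-- An upper bound for `∑_{m ≥ n} log m ^ 2 / m ^ 2`, for `n ≥ 5`. -/
noncomputable def logSqTail (n : ℕ) : ℝ :=
  2 * Real.log n ^ 2 / (2 * n - 1) + (2 * Real.log n + 2) / n

/-- A lower bound for `∑_{m ≥ n} log m / m ^ 2`, for `n ≥ 5`. -/
noncomputable def logTail (n : ℕ) : ℝ :=
  (Real.log n + 1) / n + Real.log n / (2 * n ^ 2)

lemma three_halves_le_log {n : ℕ} (hn : 5 ≤ n) : 3 / 2 ≤ Real.log n := by
  have h₂ : Real.log 4 = 2 * Real.log 2 := by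
    rw [show (4 : ℝ) = 2 ^ 2 by norm_num, Real.log_pow]
    norm_num
  have := Real.log_two_gt_d9
  have h₃ : Real.log 5 ≤ Real.log n := Real.log_le_log (by norm_num) (by exact_mod_cast hn)
  have h₄ := two_div_le_log_succ_sub_log (n := 4) (by norm_num)
  norm_num at h₄
  linarith

lemma log_sq_div_sq_le {n : ℕ} (hn : 5 ≤ n) :
    Real.log n ^ 2 / (n : ℝ) ^ 2 ≤ logSqTail n - logSqTail (n + 1) := by
  have hl := three_halves_le_log hn
  have hd := log_succ_sub_log_le (n := n) (by omega)
  have hn' : (5 : ℝ) ≤ n := by exact_mod_cast hn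
  have hd0 : Real.log n ≤ Real.log (n + 1 : ℕ) :=
    Real.log_le_log (by linarith) (by push_cast; linarith)
  unfold logSqTail
  set l := Real.log n
  set x := (n : ℝ)
  set D := (2 * x + 1) / (2 * x * (x + 1)) with hD
  have h2 : 0 < 2 * x - 1 := by linarith
  have key : 2 * Real.log (n + 1 : ℕ) ^ 2 / (2 * ((n + 1 : ℕ) : ℝ) - 1) +
      (2 * Real.log (n + 1 : ℕ) + 2) / ((n + 1 : ℕ) : ℝ) ≤
      2 * (l + D) ^ 2 / (2 * x + 1) + (2 * (l + D) + 2) / (x + 1) := by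
    have e : 2 * ((n + 1 : ℕ) : ℝ) - 1 = 2 * x + 1 := by push_cast; ring
    rw [e]
    push_cast at *
    gcongr <;> linarith
  refine le_trans ?_ (sub_le_sub_left key _)
  have : 2 * l ^ 2 / (2 * x - 1) + (2 * l + 2) / x -
      (2 * (l + D) ^ 2 / (2 * x + 1) + (2 * (l + D) + 2) / (x + 1)) - l ^ 2 / x ^ 2 =
      (2 * (x + 1) ^ 2 * l ^ 2 - (4 * x ^ 2 - 1)) /
        (2 * x ^ 2 * (x + 1) ^ 2 * ((2 * x - 1) * (2 * x + 1))) := by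
    rw [hD]
    field_simp
    ring
  have h : 0 ≤ (2 * (x + 1) ^ 2 * l ^ 2 - (4 * x ^ 2 - 1)) /
        (2 * x ^ 2 * (x + 1) ^ 2 * ((2 * x - 1) * (2 * x + 1))) := by
    apply div_nonneg
    · have : 2 ≤ l ^ 2 := by nlinarith
      nlinarith [mul_le_mul_of_nonneg_left this (by positivity : 0 ≤ 2 * (x + 1) ^ 2)]
    · positivity
  linarith

lemma logTail_sub_le {n : ℕ} (hn : 5 ≤ n) :
    logTail n - logTail (n + 1) ≤ Real.log n / (n : ℝ) ^ 2 := by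
  have hl := three_halves_le_log hn
  have hd := two_div_le_log_succ_sub_log (n := n) (by omega)
  have hn' : (5 : ℝ) ≤ n := by exact_mod_cast hn
  unfold logTail
  push_cast at *
  set l := Real.log n
  set x := (n : ℝ)
  set D := 2 / (2 * x + 1) with hD
  have key : (l + D + 1) / (x + 1) + (l + D) / (2 * (x + 1) ^ 2) ≤
      (Real.log (x + 1) + 1) / (x + 1) + Real.log (x + 1) / (2 * (x + 1) ^ 2) := by
    gcongr <;> linarith
  refine le_trans (sub_le_sub_left key _) ?_
  have : (l + 1) / x + l / (2 * x ^ 2) - ((l + D + 1) / (x + 1) + (l + D) / (2 * (x + 1) ^ 2)) -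
      l / x ^ 2 = - ((l * (2 * x + 1) - 2 * x) / (2 * x ^ 2 * (x + 1) ^ 2 * (2 * x + 1))) := by
    rw [hD]
    field_simp
    ring
  have h : 0 ≤ (l * (2 * x + 1) - 2 * x) / (2 * x ^ 2 * (x + 1) ^ 2 * (2 * x + 1)) := by
    apply div_nonneg
    · nlinarith
    · positivity
  linarith

lemma sum_range_le_of_le_sub {f G : ℕ → ℝ} {N : ℕ} (hf : ∀ n, 0 ≤ f n) (hG : ∀ n, N ≤ n → 0 ≤ G n)
    (h : ∀ n, N ≤ n → f n ≤ G n - G (n + 1)) (M : ℕ) :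
    ∑ n ∈ Finset.range M, f n ≤ ∑ n ∈ Finset.range N, f n + G N := by
  have key : ∀ M, N ≤ M →
      ∑ n ∈ Finset.range M, f n ≤ ∑ n ∈ Finset.range N, f n + (G N - G M) := by
    intro M hM
    induction M, hM using Nat.le_induction with
    | base => simp
    | succ M hM ih =>
      rw [Finset.sum_range_succ]
      linarith [h M hM]
  have h₁ : ∑ n ∈ Finset.range M, f n ≤ ∑ n ∈ Finset.range (max N M), f n :=
    Finset.sum_le_sum_of_subset_of_nonneg (Finset.range_mono (le_max_right _ _))
      fun n _ _ => hf n
  linarith [key _ (le_max_left N M), hG _ (le_max_left N M)]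

lemma sum_range_add_le_tsum {f G : ℕ → ℝ} {N : ℕ} (hf : ∀ n, 0 ≤ f n) (hs : Summable f)
    (hG : Filter.Tendsto G Filter.atTop (nhds 0))
    (h : ∀ n, N ≤ n → G n - G (n + 1) ≤ f n) :
    ∑ n ∈ Finset.range N, f n + G N ≤ ∑' n, f n := by
  have key : ∀ M, N ≤ M →
      ∑ n ∈ Finset.range N, f n + (G N - G M) ≤ ∑ n ∈ Finset.range M, f n := by
    intro M hM
    induction M, hM using Nat.le_induction with
    | base => simp
    | succ M hM ih =>
      rw [Finset.sum_range_succ]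
      linarith [h M hM]
  have ht : Filter.Tendsto (fun M => ∑ n ∈ Finset.range N, f n + (G N - G M)) Filter.atTop
      (nhds (∑ n ∈ Finset.range N, f n + (G N - 0))) :=
    (hG.const_sub _).const_add _
  rw [sub_zero] at ht
  refine le_of_tendsto ht ?_
  filter_upwards [Filter.eventually_ge_atTop N] with M hM
  exact (key M hM).trans (hs.sum_le_tsum _ fun n _ => hf n)

lemma tendsto_logTail : Filter.Tendsto logTail Filter.atTop (nhds 0) := by
  have h₁ : Filter.Tendsto (fun n : ℕ => Real.log n / n) Filter.atTop (nhds 0) :=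
    (Real.isLittleO_log_id_atTop.tendsto_div_nhds_zero).comp tendsto_natCast_atTop_atTop
  have h₂ : Filter.Tendsto (fun n : ℕ => (1 : ℝ) / n) Filter.atTop (nhds 0) :=
    tendsto_one_div_atTop_nhds_zero_nat
  have h := (h₁.add h₂).add ((h₁.mul h₂).div_const 2)
  simp only [add_zero, mul_zero, zero_div] at h
  refine h.congr fun n => ?_
  rw [logTail, add_div]
  ring

lemma log_sq_div_sq_nonneg (n : ℕ) : 0 ≤ Real.log n ^ 2 / (n : ℝ) ^ 2 := by positivity

lemma log_div_sq_nonneg (n : ℕ) : 0 ≤ Real.log n / (n : ℝ) ^ 2 :=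
  div_nonneg (Real.log_natCast_nonneg n) (by positivity)

lemma logSqTail_nonneg {n : ℕ} (hn : 1 ≤ n) : 0 ≤ logSqTail n := by
  have : (1 : ℝ) ≤ n := by exact_mod_cast hn
  have h : 0 < 2 * (n : ℝ) - 1 := by linarith
  have := Real.log_natCast_nonneg n
  unfold logSqTail
  positivity

lemma sum_range_log_sq_div_sq_le {N : ℕ} (hN : 5 ≤ N) (M : ℕ) :
    ∑ n ∈ Finset.range M, Real.log n ^ 2 / (n : ℝ) ^ 2 ≤
      ∑ n ∈ Finset.range N, Real.log n ^ 2 / (n : ℝ) ^ 2 + logSqTail N :=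
  sum_range_le_of_le_sub log_sq_div_sq_nonneg (fun _ hn => logSqTail_nonneg (by omega))
    (fun _ hn => log_sq_div_sq_le (hN.trans hn)) M

lemma summable_log_sq_div_sq : Summable fun n : ℕ => Real.log n ^ 2 / (n : ℝ) ^ 2 :=
  summable_of_sum_range_le log_sq_div_sq_nonneg (sum_range_log_sq_div_sq_le le_rfl)

lemma summable_log_div_sq : Summable fun n : ℕ => Real.log n / (n : ℝ) ^ 2 := by
  refine .of_nonneg_of_le log_div_sq_nonneg (fun n => ?_)
    (summable_log_sq_div_sq.add hasSum_zeta_two.summable)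
  rw [← add_div]
  gcongr
  nlinarith [sq_nonneg (Real.log n - 1)]

lemma summable_vonMangoldt_div_sq : Summable fun n : ℕ => Λ n / (n : ℝ) ^ 2 :=
  .of_nonneg_of_le (fun n => div_nonneg vonMangoldt_nonneg (by positivity))
    (fun n => by gcongr; exact vonMangoldt_le_log) summable_log_div_sq

lemma summable_vonMangoldt_mul_log_div_sq :
    Summable fun n : ℕ => Λ n * Real.log n / (n : ℝ) ^ 2 :=
  .of_nonneg_of_le
    (fun n => div_nonneg (mul_nonneg vonMangoldt_nonneg (Real.log_natCast_nonneg n))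
      (by positivity))
    (fun n => by
      rw [sq (Real.log n)]
      have := Real.log_natCast_nonneg n
      gcongr
      exact vonMangoldt_le_log) summable_log_sq_div_sq

lemma summable_vonMangoldt_sq_div_sq : Summable fun n : ℕ => Λ n ^ 2 / (n : ℝ) ^ 2 :=
  .of_nonneg_of_le (fun n => by positivity)
    (fun n => by
      have := vonMangoldt_nonneg (n := n)
      gcongr
      exact vonMangoldt_le_log) summable_log_sq_div_sq

/-- `ζ''(2) / ζ(2) - (ζ'(2) / ζ(2)) ^ 2`, written with real sums. -/
lemma tsum_vonMangoldt_mul_log_div_sq :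
    ∑' n : ℕ, Λ n * Real.log n / (n : ℝ) ^ 2 =
      (∑' n : ℕ, Real.log n ^ 2 / (n : ℝ) ^ 2) / (Real.pi ^ 2 / 6) -
        ((∑' n : ℕ, Real.log n / (n : ℝ) ^ 2) / (Real.pi ^ 2 / 6)) ^ 2 := by
  have hL := tsum_convolution_div_sq summable_vonMangoldt_div_sq hasSum_zeta_two.summable
  have hQ := tsum_convolution_div_sq summable_vonMangoldt_mul_log_div_sq hasSum_zeta_two.summable
  have hM := tsum_convolution_div_sq summable_vonMangoldt_div_sq summable_log_div_sq
  have hs := summable_convolution_div_sq summable_vonMangoldt_mul_log_div_sq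
    hasSum_zeta_two.summable
  have hs' := summable_convolution_div_sq summable_vonMangoldt_div_sq summable_log_div_sq
  have hQ' := hs.tsum_add hs'
  simp_rw [← add_div, ← log_sq_eq_sum_divisorsAntidiagonal] at hQ'
  simp_rw [sum_divisorsAntidiagonal_vonMangoldt_mul_one] at hL
  rw [hQ, hM, hasSum_zeta_two.tsum_eq] at hQ'
  rw [hasSum_zeta_two.tsum_eq] at hL
  rw [hQ', hL]
  have := Real.pi_pos
  field_simp
  ring

/-! ### Rational bounds -/

/-- A rational lower bound for `log n`. -/
def logLower (n : ℕ) : ℚ :=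
  ∑ m ∈ Finset.Ico 1 n,
    2 * ∑ i ∈ Finset.range 7, (1 / (2 * m + 1) : ℚ) ^ (2 * i + 1) / (2 * i + 1)

/-- A rational upper bound for `log n`. -/
def logUpper (n : ℕ) : ℚ :=
  ∑ m ∈ Finset.Ico 1 n,
    2 * (∑ i ∈ Finset.range 7, (1 / (2 * m + 1) : ℚ) ^ (2 * i + 1) / (2 * i + 1) +
      (1 / (2 * m + 1)) ^ (2 * 7 + 1) / (1 - (1 / (2 * m + 1)) ^ 2))

lemma log_eq_sum_Ico (n : ℕ) :
    Real.log n = ∑ m ∈ Finset.Ico 1 n, (Real.log (m + 1 : ℕ) - Real.log m) := by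
  rcases Nat.eq_zero_or_pos n with rfl | hn
  · simp
  · rw [Finset.sum_Ico_sub (fun m : ℕ => Real.log m) hn]
    simp

lemma logLower_le_log (n : ℕ) : (logLower n : ℝ) ≤ Real.log n := by
  rw [log_eq_sum_Ico, logLower]
  push_cast
  refine Finset.sum_le_sum fun m hm => ?_
  exact_mod_cast (log_succ_sub_log_bounds (Finset.mem_Ico.1 hm).1 7).1

lemma log_le_logUpper (n : ℕ) : Real.log n ≤ logUpper n := by
  rw [log_eq_sum_Ico, logUpper]
  push_cast
  refine Finset.sum_le_sum fun m hm => ?_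
  exact_mod_cast (log_succ_sub_log_bounds (Finset.mem_Ico.1 hm).1 7).2

lemma logLower_nonneg (n : ℕ) : 0 ≤ logLower n := by
  unfold logLower
  positivity

lemma le_tsum_log_div_sq : 0.937543 ≤ ∑' n : ℕ, Real.log n / (n : ℝ) ^ 2 := by
  refine le_trans ?_ (sum_range_add_le_tsum (N := 50) log_div_sq_nonneg summable_log_div_sq
    tendsto_logTail fun n hn => logTail_sub_le (by omega))
  have h : (0.937543 : ℚ) ≤ ∑ n ∈ Finset.range 50, logLower n / n ^ 2 +
      ((logLower 50 + 1) / (50 : ℕ) + logLower 50 / (2 * (50 : ℕ) ^ 2)) := by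
    decide +kernel
  have h' : ((0.937543 : ℚ) : ℝ) ≤ _ := Rat.cast_le.2 h
  refine le_trans (by norm_num) (h'.trans ?_)
  rw [logTail]
  simp only [Rat.cast_add, Rat.cast_sum, Rat.cast_div, Rat.cast_mul, Rat.cast_pow,
    Rat.cast_natCast, Rat.cast_one, Rat.cast_ofNat]
  gcongr <;> exact logLower_le_log _

lemma tsum_log_sq_div_sq_le : ∑' n : ℕ, Real.log n ^ 2 / (n : ℝ) ^ 2 ≤ 1.989297 := by
  refine (Real.tsum_le_of_sum_range_le log_sq_div_sq_nonneg
    (sum_range_log_sq_div_sq_le (N := 50) (by norm_num))).trans ?_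
  have h : ∑ n ∈ Finset.range 50, logUpper n ^ 2 / n ^ 2 +
      (2 * logUpper 50 ^ 2 / (2 * (50 : ℕ) - 1) + (2 * logUpper 50 + 2) / (50 : ℕ)) ≤
      (1.989297 : ℚ) := by
    decide +kernel
  have h' : _ ≤ ((1.989297 : ℚ) : ℝ) := Rat.cast_le.2 h
  refine le_trans (le_trans ?_ h') (by norm_num)
  rw [logSqTail]
  simp only [Rat.cast_add, Rat.cast_sum, Rat.cast_div, Rat.cast_mul, Rat.cast_pow, Rat.cast_sub,
    Rat.cast_natCast, Rat.cast_one, Rat.cast_ofNat]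
  have h₀ (n : ℕ) := Real.log_natCast_nonneg n
  have h₁ : (0 : ℝ) < 2 * (50 : ℕ) - 1 := by norm_num
  gcongr <;> first | exact h₀ _ | exact log_le_logUpper _

lemma injOn_prime_pow_add_two (s : Finset ℕ) (hs : ∀ p ∈ s, p.Prime) (t : Finset ℕ) :
    Set.InjOn (fun x : ℕ × ℕ => x.1 ^ (x.2 + 2)) (s ×ˢ t : Finset (ℕ × ℕ)) := by
  rintro ⟨p, k⟩ hp ⟨q, m⟩ hq h
  simp only [Finset.coe_product, Set.mem_prod, Finset.mem_coe] at hp hq h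
  obtain ⟨rfl, h'⟩ := (hs p hp.1).pow_inj (hs q hq.1) h
  simpa using h'

lemma le_tsum_vonMangoldt_mul_log_sub :
    0.079237 ≤ ∑' n : ℕ, (Λ n * Real.log n / (n : ℝ) ^ 2 - Λ n ^ 2 / (n : ℝ) ^ 2) := by
  let s : Finset ℕ := {2, 3, 5, 7, 11, 13, 17, 19, 23, 29, 31}
  have hs : ∀ p ∈ s, p.Prime := by
    simp only [s, Finset.mem_insert, Finset.mem_singleton]
    rintro p (rfl | rfl | rfl | rfl | rfl | rfl | rfl | rfl | rfl | rfl | rfl) <;> norm_num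
  refine le_trans ?_ ((summable_vonMangoldt_mul_log_div_sq.sub
    summable_vonMangoldt_sq_div_sq).sum_le_tsum
      ((s ×ˢ Finset.range 8).image fun x : ℕ × ℕ => x.1 ^ (x.2 + 2)) fun n _ => ?_)
  · rw [Finset.sum_image (injOn_prime_pow_add_two s hs _), Finset.sum_product]
    have h : (0.079237 : ℚ) ≤ ∑ p ∈ s, ∑ k ∈ Finset.range 8,
        (k + 1) * (logLower p / p ^ (k + 2)) ^ 2 := by
      decide +kernel
    have h' : ((0.079237 : ℚ) : ℝ) ≤ _ := Rat.cast_le.2 h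
    refine le_trans (by norm_num) (h'.trans ?_)
    push_cast
    refine Finset.sum_le_sum fun p hp => Finset.sum_le_sum fun k _ => ?_
    rw [vonMangoldt_apply_pow (by omega), vonMangoldt_apply_prime (hs p hp), Real.log_pow]
    have h₀ : (0 : ℝ) ≤ logLower p := by exact_mod_cast logLower_nonneg p
    calc ((k : ℝ) + 1) * (logLower p / (p : ℝ) ^ (k + 2)) ^ 2
        ≤ (k + 1) * (Real.log p / (p : ℝ) ^ (k + 2)) ^ 2 := by
          gcongr
          exact logLower_le_log p
      _ = _ := by
          push_cast
          ring
  · rw [← sub_div, sq (Λ n), ← mul_sub]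
    exact div_nonneg (mul_nonneg vonMangoldt_nonneg (sub_nonneg.2 vonMangoldt_le_log))
      (by positivity)

/-- The sum `∑_{n≥1} Λ(n)²/n²` converges and is `< 0.8053`. -/
theorem sum_vonMangoldt_sq_div_sq_lt :
    Summable (fun n : ℕ => Λ n ^ 2 / (n : ℝ) ^ 2) ∧
    ∑' n : ℕ, Λ n ^ 2 / (n : ℝ) ^ 2 < 0.8053 := by
  refine ⟨summable_vonMangoldt_sq_div_sq, ?_⟩
  have hT := le_tsum_vonMangoldt_mul_log_sub
  rw [summable_vonMangoldt_mul_log_div_sq.tsum_sub summable_vonMangoldt_sq_div_sq,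
    tsum_vonMangoldt_mul_log_div_sq] at hT
  have hL := le_tsum_log_div_sq
  have hQ := tsum_log_sq_div_sq_le
  have hπ₁ := Real.pi_gt_d6.le
  have hπ₂ := Real.pi_lt_d6.le
  have h₁ : (∑' n : ℕ, Real.log n ^ 2 / (n : ℝ) ^ 2) / (Real.pi ^ 2 / 6) ≤
      1.989297 / (3.141592 ^ 2 / 6) := by
    gcongr
  have h₂ : (0.937543 / (3.141593 ^ 2 / 6)) ^ 2 ≤
      ((∑' n : ℕ, Real.log n / (n : ℝ) ^ 2) / (Real.pi ^ 2 / 6)) ^ 2 := by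
    gcongr
  have h₃ : 1.989297 / (3.141592 ^ 2 / 6) - (0.937543 / (3.141593 ^ 2 / 6)) ^ 2 - 0.079237 <
      (0.8053 : ℝ) := by
    norm_num
  linarith
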